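/- arXiv:1805.05150 — 2 statements merged into one kernel-verified Lean document; each statement's English description precedes it below -/
import Mathlib

section
/- Let v : ℝ² → ℝ² be Lipschitz and ℤ²-periodic, and let M be any 2×2 real matrix. Then ∫_{[0,1)²} det(M + Dv(x)) dx = det(M); in particular, if det(M) = 0 then ∫_{[0,1)²} det(M + Dv(x)) dx = 0. -/
open MeasureTheory

/-- The determinant of a 2×2 real matrix. -/
def det2 (A : Matrix (Fin 2) (Fin 2) ℝ) : ℝ := A 0 0 * A 1 1 - A 0 1 * A 1 0

/-- The Jacobian matrix of a map `v : ℝ² → ℝ²` at `x`: `(jac v x) i j = ∂ⱼ vⁱ (x)`.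
(For a Lipschitz map this coincides a.e. with the total derivative, by Rademacher.) -/
noncomputable def jac (v : (Fin 2 → ℝ) → (Fin 2 → ℝ)) (x : Fin 2 → ℝ) :
    Matrix (Fin 2) (Fin 2) ℝ :=
  Matrix.of fun i j => fderiv ℝ v x (Pi.single j 1) i

/-- `ℤ²`-periodicity of a map `ℝ² → ℝ²`. -/
def ZsqPeriodic (v : (Fin 2 → ℝ) → (Fin 2 → ℝ)) : Prop :=
  ∀ (x : Fin 2 → ℝ) (z : Fin 2 → ℤ), v (x + fun i => (z i : ℝ)) = v x

/-- The unit cell `[0,1)²`. -/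
def unitCell : Set (Fin 2 → ℝ) := Set.univ.pi fun _ => Set.Ico (0 : ℝ) 1

open Filter Topology Pointwise

section DifferenceQuotient

variable {E : Type*} [NormedAddCommGroup E] [NormedSpace ℝ E]

/-- The difference quotient of `f` at `x` in direction `a` with step `c⁻¹`. -/
noncomputable def diffQuot (f : E → ℝ) (a : E) (c : ℝ) (x : E) : ℝ :=
  c * (f (x + c⁻¹ • a) - f x)

lemma Continuous.diffQuot {f : E → ℝ} (hf : Continuous f) (a : E) (c : ℝ) :
    Continuous (diffQuot f a c) := by
  unfold _root_.diffQuot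
  fun_prop

lemma LipschitzWith.abs_diffQuot_le {f : E → ℝ} {K : NNReal} (hf : LipschitzWith K f)
    (a : E) (c : ℝ) (x : E) : |diffQuot f a c x| ≤ K * ‖a‖ := by
  rcases eq_or_ne c 0 with rfl | hc
  · simp only [diffQuot, zero_mul, abs_zero]
    positivity
  · have h := hf.dist_le_mul (x + c⁻¹ • a) x
    rw [Real.dist_eq, dist_eq_norm, add_sub_cancel_left, norm_smul, norm_inv,
      Real.norm_eq_abs] at h
    have hc' : 0 < |c| := abs_pos.2 hc
    calc |diffQuot f a c x| = |c| * |f (x + c⁻¹ • a) - f x| := by rw [diffQuot, abs_mul]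
      _ ≤ |c| * (K * (|c|⁻¹ * ‖a‖)) := by gcongr
      _ = K * ‖a‖ := by field_simp

lemma DifferentiableAt.tendsto_diffQuot {f : E → ℝ} {x : E} (hf : DifferentiableAt ℝ f x)
    (a : E) {c : ℕ → ℝ} (hc : Tendsto (fun n => ‖c n‖) atTop atTop) :
    Tendsto (fun n => diffQuot f a (c n) x) atTop (𝓝 (fderiv ℝ f x a)) := by
  simpa [diffQuot] using hf.hasFDerivAt.lim a hc

variable [MeasurableSpace E] [BorelSpace E] {μ : Measure E} {s : Set E}

lemma LipschitzWith.integrableOn_fderiv_apply {f : E → ℝ} {K : NNReal}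
    (hf : LipschitzWith K f) (hs : μ s ≠ ⊤) (a : E) :
    IntegrableOn (fun x => fderiv ℝ f x a) s μ := by
  refine Measure.integrableOn_of_bounded (M := K * ‖a‖) hs
    (measurable_fderiv_apply_const ℝ f a).aestronglyMeasurable
    (Eventually.of_forall fun x => ?_)
  exact (fderiv ℝ f x).le_of_opNorm_le (norm_fderiv_le_of_lipschitz ℝ hf) a

lemma LipschitzWith.integrableOn_fderiv_apply_mul {f g : E → ℝ} {K L : NNReal}
    (hf : LipschitzWith K f) (hg : LipschitzWith L g) (hs : μ s ≠ ⊤) (a b : E) :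
    IntegrableOn (fun x => fderiv ℝ f x a * fderiv ℝ g x b) s μ := by
  refine (hg.integrableOn_fderiv_apply hs b).bdd_mul (c := K * ‖a‖)
    (measurable_fderiv_apply_const ℝ f a).aestronglyMeasurable
    (Eventually.of_forall fun x => ?_)
  exact (fderiv ℝ f x).le_of_opNorm_le (norm_fderiv_le_of_lipschitz ℝ hf) a

variable [FiniteDimensional ℝ E] [μ.IsAddHaarMeasure]

lemma LipschitzWith.tendsto_setIntegral_diffQuot {f : E → ℝ} {K : NNReal}
    (hf : LipschitzWith K f) (hs : μ s ≠ ⊤) (a : E)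
    {c : ℕ → ℝ} (hc : Tendsto (fun n => ‖c n‖) atTop atTop) :
    Tendsto (fun n => ∫ x in s, diffQuot f a (c n) x ∂μ) atTop
      (𝓝 (∫ x in s, fderiv ℝ f x a ∂μ)) := by
  refine tendsto_integral_of_dominated_convergence (fun _ => K * ‖a‖)
    (fun n => (hf.continuous.diffQuot a (c n)).aestronglyMeasurable)
    (integrableOn_const hs) (fun n => Eventually.of_forall (hf.abs_diffQuot_le a (c n))) ?_
  filter_upwards [ae_restrict_of_ae hf.ae_differentiableAt] with x hx
  exact hx.tendsto_diffQuot a hc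

lemma LipschitzWith.tendsto_setIntegral_diffQuot_mul {f g : E → ℝ} {K L : NNReal}
    (hf : LipschitzWith K f) (hg : LipschitzWith L g) (hs : μ s ≠ ⊤) (a b : E)
    {c : ℕ → ℝ} (hc : Tendsto (fun n => ‖c n‖) atTop atTop) :
    Tendsto (fun n => ∫ x in s, diffQuot f a (c n) x * diffQuot g b (c n) x ∂μ) atTop
      (𝓝 (∫ x in s, fderiv ℝ f x a * fderiv ℝ g x b ∂μ)) := by
  refine tendsto_integral_of_dominated_convergence (fun _ => (K * ‖a‖) * (L * ‖b‖))
    (fun n => ((hf.continuous.diffQuot a (c n)).mul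
      (hg.continuous.diffQuot b (c n))).aestronglyMeasurable)
    (integrableOn_const hs) (fun n => Eventually.of_forall fun x => ?_) ?_
  · rw [norm_mul]
    exact mul_le_mul (hf.abs_diffQuot_le a (c n) x) (hg.abs_diffQuot_le b (c n) x)
      (norm_nonneg _) (by positivity)
  · filter_upwards [ae_restrict_of_ae hf.ae_differentiableAt,
      ae_restrict_of_ae hg.ae_differentiableAt] with x hfx hgx
    exact (hfx.tendsto_diffQuot a hc).mul (hgx.tendsto_diffQuot b hc)

end DifferenceQuotient

section UnitCell

/-- `ℤ²`-periodicity of a scalar function on `ℝ²`. -/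
def ScalarZsqPeriodic (f : (Fin 2 → ℝ) → ℝ) : Prop :=
  ∀ (x : Fin 2 → ℝ) (z : Fin 2 → ℤ), f (x + fun i => (z i : ℝ)) = f x

lemma ScalarZsqPeriodic.comp_add_right {f : (Fin 2 → ℝ) → ℝ} (hf : ScalarZsqPeriodic f)
    (a : Fin 2 → ℝ) : ScalarZsqPeriodic fun x => f (x + a) := fun x z => by
  simpa only [add_right_comm] using hf (x + a) z

lemma ScalarZsqPeriodic.mul {f g : (Fin 2 → ℝ) → ℝ} (hf : ScalarZsqPeriodic f)
    (hg : ScalarZsqPeriodic g) : ScalarZsqPeriodic fun x => f x * g x := fun x z => by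
  simp only [hf x z, hg x z]

lemma volume_unitCell : volume unitCell = 1 := by
  simp [unitCell, volume_pi_pi]

lemma volume_unitCell_ne_top : volume unitCell ≠ ⊤ := by
  simp [volume_unitCell]

lemma Continuous.integrableOn_unitCell {f : (Fin 2 → ℝ) → ℝ} (hf : Continuous f) :
    IntegrableOn f unitCell := by
  refine (hf.continuousOn.integrableOn_compact
    (isCompact_univ_pi fun _ : Fin 2 => isCompact_Icc (a := (0 : ℝ)) (b := 1))).mono_set ?_
  exact Set.pi_mono fun _ _ => Set.Ico_subset_Icc_self

lemma ScalarZsqPeriodic.setIntegral_comp_add_right {f : (Fin 2 → ℝ) → ℝ}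
    (hf : ScalarZsqPeriodic f) (a : Fin 2 → ℝ) :
    ∫ x in unitCell, f (x + a) = ∫ x in unitCell, f x := by
  have hdom := ZSpan.isAddFundamentalDomain' (Pi.basisFun ℝ (Fin 2)) volume
  rw [ZSpan.fundamentalDomain_pi_basisFun] at hdom
  have hinv : ∀ (g : (Submodule.span ℤ (Set.range (Pi.basisFun ℝ (Fin 2)))).toAddSubgroup)
      (x : Fin 2 → ℝ), f (g +ᵥ x) = f x := by
    rintro ⟨g, hg⟩ x
    obtain ⟨z, rfl⟩ := (Submodule.mem_span_range_iff_exists_fun ℤ).1 hg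
    rw [← hf x z, AddSubgroup.vadd_def, vadd_eq_add, add_comm]
    congr 2
    ext i
    simp [Pi.basisFun_apply, Finset.sum_apply, Pi.single_apply]
  have htrans : ∫ x in unitCell, f (x + a) = ∫ x in a +ᵥ unitCell, f x := by
    have h := (measurePreserving_add_right (volume : Measure (Fin 2 → ℝ)) a).setIntegral_image_emb
      (measurableEmbedding_addRight a) f unitCell
    rw [← h]
    congr 2
    exact Set.image_congr fun x _ => add_comm x a
  have : Countable (Submodule.span ℤ (Set.range (Pi.basisFun ℝ (Fin 2)))).toAddSubgroup :=
    inferInstanceAs (Countable (Submodule.span ℤ (Set.range (Pi.basisFun ℝ (Fin 2)))))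
  rw [htrans]
  exact (hdom.vadd_of_comm a).setIntegral_eq hdom hinv

lemma ScalarZsqPeriodic.setIntegral_add_sub {f : (Fin 2 → ℝ) → ℝ}
    (hf : ScalarZsqPeriodic f) (hc : Continuous f) (a : Fin 2 → ℝ) :
    ∫ x in unitCell, (f (x + a) - f x) = 0 := by
  have hca : Continuous fun x => f (x + a) := by fun_prop
  rw [integral_sub hca.integrableOn_unitCell hc.integrableOn_unitCell,
    hf.setIntegral_comp_add_right, sub_self]

/-- Discrete integration by parts: the finite-difference analogue of the vanishing of the
integral of a Jacobian determinant. -/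
lemma ScalarZsqPeriodic.setIntegral_diff_mul_diff {f g : (Fin 2 → ℝ) → ℝ}
    (hf : ScalarZsqPeriodic f) (hg : ScalarZsqPeriodic g) (hfc : Continuous f)
    (hgc : Continuous g) (s t : Fin 2 → ℝ) :
    ∫ x in unitCell, (f (x + s) - f x) * (g (x + t) - g x) =
      ∫ x in unitCell, (f (x + -t) - f x) * (g (x + -s) - g x) := by
  have hR : ScalarZsqPeriodic fun x => (f (x + -t) - f x) * (g (x + -s) - g x) := fun x z => by
    simp only [hf x z, hg x z, hf.comp_add_right (-t) x z, hg.comp_add_right (-s) x z]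
  rw [← hR.setIntegral_comp_add_right (s + t), ← sub_eq_zero,
    ← integral_sub (Continuous.integrableOn_unitCell (by fun_prop))
      (Continuous.integrableOn_unitCell (by fun_prop))]
  have hP := (hf.mul (hg.comp_add_right t)).setIntegral_add_sub (by fun_prop) s
  have hQ := ((hf.comp_add_right s).mul hg).setIntegral_add_sub (by fun_prop) t
  have hS := (hf.mul hg).setIntegral_add_sub (by fun_prop) (s + t)
  rw [← sub_eq_zero.2 (hP.trans hS.symm), ← add_zero (_ - _), ← hQ,
    ← integral_sub (Continuous.integrableOn_unitCell (by fun_prop))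
      (Continuous.integrableOn_unitCell (by fun_prop)),
    ← integral_add (Continuous.integrableOn_unitCell (by fun_prop))
      (Continuous.integrableOn_unitCell (by fun_prop))]
  congr 1
  ext x
  have h₁ : x + (s + t) + -t = x + s := by abel
  have h₂ : x + (s + t) + -s = x + t := by abel
  have h₃ : x + s + t = x + (s + t) := by abel
  have h₄ : x + t + s = x + (s + t) := by abel
  simp only [h₁, h₂, h₃, h₄]
  ring

lemma tendsto_norm_natCast_atTop : Tendsto (fun n : ℕ => ‖(n : ℝ)‖) atTop atTop := by
  simpa using tendsto_natCast_atTop_atTop (R := ℝ)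

/-- The partial derivatives of a periodic Lipschitz function have mean zero. -/
lemma ScalarZsqPeriodic.setIntegral_fderiv_apply {f : (Fin 2 → ℝ) → ℝ} {K : NNReal}
    (hf : ScalarZsqPeriodic f) (hL : LipschitzWith K f) (a : Fin 2 → ℝ) :
    ∫ x in unitCell, fderiv ℝ f x a = 0 := by
  refine tendsto_nhds_unique
    (hL.tendsto_setIntegral_diffQuot volume_unitCell_ne_top a tendsto_norm_natCast_atTop) ?_
  simp only [diffQuot, integral_const_mul, hf.setIntegral_add_sub hL.continuous, mul_zero,
    tendsto_const_nhds]

lemma ScalarZsqPeriodic.setIntegral_fderiv_mul_fderiv {f g : (Fin 2 → ℝ) → ℝ} {K L : NNReal}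
    (hf : ScalarZsqPeriodic f) (hg : ScalarZsqPeriodic g) (hfL : LipschitzWith K f)
    (hgL : LipschitzWith L g) (a b : Fin 2 → ℝ) :
    ∫ x in unitCell, fderiv ℝ f x a * fderiv ℝ g x b =
      ∫ x in unitCell, fderiv ℝ f x b * fderiv ℝ g x a := by
  refine tendsto_nhds_unique
    (hfL.tendsto_setIntegral_diffQuot_mul hgL volume_unitCell_ne_top a b
      tendsto_norm_natCast_atTop) ?_
  have hneg : Tendsto (fun n : ℕ => ‖-(n : ℝ)‖) atTop atTop := by
    simpa only [norm_neg] using tendsto_norm_natCast_atTop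
  refine (hfL.tendsto_setIntegral_diffQuot_mul hgL volume_unitCell_ne_top b a hneg).congr
    fun n => ?_
  simp only [diffQuot, mul_mul_mul_comm (n : ℝ), mul_mul_mul_comm (-(n : ℝ)), integral_const_mul,
    inv_neg, neg_smul, neg_mul_neg]
  rw [hf.setIntegral_diff_mul_diff hg hfL.continuous hgL.continuous ((n : ℝ)⁻¹ • a)]

end UnitCell

theorem stmt_9 (v : (Fin 2 → ℝ) → (Fin 2 → ℝ)) (K : NNReal)
    (hlip : LipschitzWith K v) (hper : ZsqPeriodic v)
    (M : Matrix (Fin 2) (Fin 2) ℝ) :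
    (∫ x in unitCell, det2 (M + jac v x)) = det2 M ∧
    (det2 M = 0 → (∫ x in unitCell, det2 (M + jac v x)) = 0) := by
  suffices h : (∫ x in unitCell, det2 (M + jac v x)) = det2 M from ⟨h, fun h0 => h.trans h0⟩
  have hcomp : ∀ i, LipschitzWith K fun x => v x i := fun i =>
    LipschitzWith.of_dist_le_mul fun x y =>
      (dist_le_pi_dist (v x) (v y) i).trans (hlip.dist_le_mul x y)
  have hperi : ∀ i, ScalarZsqPeriodic fun x => v x i := fun i x z => congrFun (hper x z) i
  let d : Fin 2 → Fin 2 → (Fin 2 → ℝ) → ℝ := fun i j x =>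
    fderiv ℝ (fun y => v y i) x (Pi.single j 1)
  have hd : ∀ i j, IntegrableOn (d i j) unitCell := fun i j =>
    (hcomp i).integrableOn_fderiv_apply volume_unitCell_ne_top _
  have hdd : ∀ i j k l, IntegrableOn (fun x => d i j x * d k l x) unitCell := fun i j k l =>
    (hcomp i).integrableOn_fderiv_apply_mul (hcomp k) volume_unitCell_ne_top _ _
  have hd0 : ∀ i j, ∫ x in unitCell, d i j x = 0 := fun i j =>
    (hperi i).setIntegral_fderiv_apply (hcomp i) _
  have hJ : ∫ x in unitCell, d 0 0 x * d 1 1 x = ∫ x in unitCell, d 0 1 x * d 1 0 x :=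
    (hperi 0).setIntegral_fderiv_mul_fderiv (hperi 1) (hcomp 0) (hcomp 1) _ _
  have hae : (fun x => det2 (M + jac v x)) =ᵐ[volume.restrict unitCell] fun x =>
      (det2 M + ((M 0 0 * d 1 1 x + M 1 1 * d 0 0 x) - (M 0 1 * d 1 0 x + M 1 0 * d 0 1 x))) +
        (d 0 0 x * d 1 1 x - d 0 1 x * d 1 0 x) := by
    filter_upwards [ae_restrict_of_ae hlip.ae_differentiableAt] with x hx
    have hjac : ∀ i j, jac v x i j = d i j x := fun i j => by
      simp only [jac, Matrix.of_apply, d]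
      rw [fderiv_apply hx i]
      rfl
    simp only [det2, Matrix.add_apply, hjac]
    ring
  have hm : ∀ c i j, IntegrableOn (fun x => c * d i j x) unitCell := fun c i j =>
    (hd i j).const_mul c
  have hA : IntegrableOn (fun x => M 0 0 * d 1 1 x + M 1 1 * d 0 0 x) unitCell :=
    (hm _ 1 1).add (hm _ 0 0)
  have hB : IntegrableOn (fun x => M 0 1 * d 1 0 x + M 1 0 * d 0 1 x) unitCell :=
    (hm _ 1 0).add (hm _ 0 1)
  have hC : IntegrableOn (fun _ => det2 M) unitCell := integrableOn_const volume_unitCell_ne_top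
  have hAB : IntegrableOn (fun x => (M 0 0 * d 1 1 x + M 1 1 * d 0 0 x) -
      (M 0 1 * d 1 0 x + M 1 0 * d 0 1 x)) unitCell := hA.sub hB
  have hD : IntegrableOn (fun x => d 0 0 x * d 1 1 x - d 0 1 x * d 1 0 x) unitCell :=
    (hdd 0 0 1 1).sub (hdd 0 1 1 0)
  rw [integral_congr_ae hae, integral_add (by exact hC.add hAB) hD, integral_add hC hAB,
    integral_sub hA hB, integral_add (hm _ 1 1) (hm _ 0 0),
    integral_add (hm _ 1 0) (hm _ 0 1), integral_sub (hdd 0 0 1 1) (hdd 0 1 1 0), hJ]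
  simp [integral_const_mul, hd0, measureReal_def, volume_unitCell]
end

section
/- (Loss of strong ellipticity for the half-half laminate.) Assume the Gutiérrez conditions and let χ_lam : ℝ² → {0,1} be the 1-periodic laminate χ_lam(x) = 1 if the fractional part of x₁ lies in [0,1/2) and χ_lam(x) = 0 otherwise. Let M = e₂⊗e₂ (the matrix with M₂₂ = 1 and all other entries 0). Then: (i) for every Lipschitz ℤ²-periodic v : ℝ² → ℝ², ∫_{[0,1)²} [χ_lam(x)·Q₁(M + Dv(x)) + (1−χ_lam(x))·Q₂(M + Dv(x))] dx ≥ 0; and (ii) there exists a Lipschitz ℤ²-periodic v : ℝ² → ℝ² for which this integral equals 0. Hence the infimum of the periodic cell energy in the rank-one direction e₂⊗e₂ equals 0, i.e. the homogenized tensor loses strict strong ellipticity. -/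
open MeasureTheory

/-- The isotropic elasticity quadratic form on 2×2 real matrices with Lamé
parameters `lam`, `mu`: `Q_{λ,μ}(A) = (λ+2μ)(A₁₁²+A₂₂²) + 2λA₁₁A₂₂ + μ(A₁₂+A₂₁)²`. -/
def isoQ (lam mu : ℝ) (A : Matrix (Fin 2) (Fin 2) ℝ) : ℝ :=
  (lam + 2 * mu) * ((A 0 0) ^ 2 + (A 1 1) ^ 2) + 2 * lam * (A 0 0 * A 1 1)
    + mu * (A 0 1 + A 1 0) ^ 2

/-- The half-half laminate indicator: `1` iff the fractional part of `x₁` is in `[0,1/2)`. -/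
noncomputable def lamChi (x : Fin 2 → ℝ) : ℝ :=
  if Int.fract (x 0) < 1 / 2 then 1 else 0

/-- The rank-one matrix `e₂ ⊗ e₂`. -/
def e2e2 : Matrix (Fin 2) (Fin 2) ℝ := Matrix.of fun i j => if i = 1 ∧ j = 1 then 1 else 0

/-- The periodic cell energy of the half-half laminate in the direction `e₂ ⊗ e₂`. -/
noncomputable def lamEnergy (lam1 mu1 lam2 mu2 : ℝ)
    (v : (Fin 2 → ℝ) → (Fin 2 → ℝ)) : ℝ :=
  ∫ x in unitCell,
    (lamChi x * isoQ lam1 mu1 (e2e2 + jac v x)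
      + (1 - lamChi x) * isoQ lam2 mu2 (e2e2 + jac v x))

open Filter Topology

/-- Over the unit cell, the integral of a `ℤ²`-periodic function is translation invariant. -/
lemma setIntegral_unitCell_add {f : (Fin 2 → ℝ) → ℝ}
    (hf : ∀ (x : Fin 2 → ℝ) (z : Fin 2 → ℤ), f (x + fun i => (z i : ℝ)) = f x)
    (t : Fin 2 → ℝ) :
    ∫ x in unitCell, f (x + t) = ∫ x in unitCell, f x := by
  have hcell : unitCell = ZSpan.fundamentalDomain (Pi.basisFun ℝ (Fin 2)) :=
    ZSpan.fundamentalDomain_pi_basisFun.symm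
  have hdom := ZSpan.isAddFundamentalDomain' (Pi.basisFun ℝ (Fin 2)) volume
  rw [← hcell] at hdom
  have hinv : ∀ (g : (Submodule.span ℤ (Set.range (Pi.basisFun ℝ (Fin 2)))).toAddSubgroup)
      (x : Fin 2 → ℝ), f (g +ᵥ x) = f x := by
    rintro ⟨g, hg⟩ x
    rw [Submodule.mem_toAddSubgroup, Module.Basis.mem_span_iff_repr_mem] at hg
    choose z hz using hg
    have hgz : g = fun i => (z i : ℝ) := funext fun i => by simpa using (hz i).symm
    change f (g + x) = f x
    rw [add_comm, hgz, hf]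
  have : Countable (Submodule.span ℤ (Set.range (Pi.basisFun ℝ (Fin 2)))).toAddSubgroup :=
    inferInstanceAs (Countable (Submodule.span ℤ (Set.range (Pi.basisFun ℝ (Fin 2)))))
  rw [← (hdom.vadd_of_comm t).setIntegral_eq hdom hinv, ← Set.image_vadd,
    (measurePreserving_vadd t volume).setIntegral_image_emb (measurableEmbedding_const_vadd t)]
  simp only [vadd_eq_add, add_comm]

instance isFiniteMeasure_restrict_unitCell :
    IsFiniteMeasure ((volume : Measure (Fin 2 → ℝ)).restrict unitCell) :=
  ⟨by simp [unitCell, volume_pi_pi]⟩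

lemma Continuous.integrable_restrict_unitCell {f : (Fin 2 → ℝ) → ℝ} (hf : Continuous f) :
    Integrable f (volume.restrict unitCell) :=
  (hf.integrableOn_Icc (a := 0) (b := 1)).mono_set fun _ hx =>
    ⟨fun i => (hx i trivial).1, fun i => (hx i trivial).2.le⟩

lemma LipschitzWith.norm_inv_smul_sub_le {E : Type*} [NormedAddCommGroup E] [NormedSpace ℝ E]
    {u : E → ℝ} {K : NNReal} (hu : LipschitzWith K u) (x e : E) {h : ℝ} (hh : 0 < h) :
    ‖h⁻¹ • (u (x + h • e) - u x)‖ ≤ K * ‖e‖ := by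
  have := hu.norm_sub_le (x + h • e) x
  rw [add_sub_cancel_left, norm_smul, Real.norm_of_nonneg hh.le] at this
  rw [norm_smul, norm_inv, Real.norm_of_nonneg hh.le, inv_mul_le_iff₀ hh]
  linarith

lemma integral_unitCell_lineDeriv_eq_zero {u : (Fin 2 → ℝ) → ℝ} {K : NNReal}
    (hu : LipschitzWith K u)
    (hup : ∀ (x : Fin 2 → ℝ) (z : Fin 2 → ℤ), u (x + fun i => (z i : ℝ)) = u x)
    (e : Fin 2 → ℝ) : ∫ x in unitCell, lineDeriv ℝ u x e = 0 := by
  have hint : ∀ t, Integrable (fun x => u (x + t)) (volume.restrict unitCell) := by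
    have := hu.continuous
    exact fun t => Continuous.integrable_restrict_unitCell (by fun_prop)
  have hlim : Tendsto (fun h : ℝ => ∫ x in unitCell, h⁻¹ • (u (x + h • e) - u x)) (𝓝[>] 0)
      (𝓝 (∫ x in unitCell, lineDeriv ℝ u x e)) := by
    refine tendsto_integral_filter_of_dominated_convergence (fun _ => K * ‖e‖) ?_ ?_
      (integrable_const _) ?_
    · have := hu.continuous
      exact Eventually.of_forall fun h => Continuous.aestronglyMeasurable (by fun_prop)
    · filter_upwards [self_mem_nhdsWithin] with h hh
      exact ae_of_all _ fun x => hu.norm_inv_smul_sub_le x e hh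
    · filter_upwards [ae_restrict_of_ae (hu.ae_lineDifferentiableAt e)] with x hx
      exact hx.hasLineDerivAt.tendsto_slope_zero_right
  refine tendsto_nhds_unique hlim (tendsto_const_nhds.congr fun h => ?_)
  rw [integral_smul, integral_sub (hint _) (by simpa using hint 0),
    setIntegral_unitCell_add hup, sub_self, smul_zero]

lemma tendsto_integral_unitCell_slope_mul_slope {u w : (Fin 2 → ℝ) → ℝ} {K L : NNReal}
    (hu : LipschitzWith K u) (hw : LipschitzWith L w) (e e' : Fin 2 → ℝ) :
    Tendsto (fun h : ℝ => ∫ x in unitCell,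
        (h⁻¹ • (u (x + h • e) - u x)) * (h⁻¹ • (w (x + h • e') - w x))) (𝓝[>] 0)
      (𝓝 (∫ x in unitCell, lineDeriv ℝ u x e * lineDeriv ℝ w x e')) := by
  refine tendsto_integral_filter_of_dominated_convergence
    (fun _ => (K * ‖e‖) * (L * ‖e'‖)) ?_ ?_ (integrable_const _) ?_
  · have := hu.continuous
    have := hw.continuous
    exact Eventually.of_forall fun h => Continuous.aestronglyMeasurable (by fun_prop)
  · filter_upwards [self_mem_nhdsWithin] with h hh
    refine ae_of_all _ fun x => ?_
    rw [norm_mul]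
    exact mul_le_mul (hu.norm_inv_smul_sub_le x e hh) (hw.norm_inv_smul_sub_le x e' hh)
      (norm_nonneg _) (by positivity)
  · filter_upwards [ae_restrict_of_ae (hu.ae_lineDifferentiableAt e),
      ae_restrict_of_ae (hw.ae_lineDifferentiableAt e')] with x hx hx'
    exact hx.hasLineDerivAt.tendsto_slope_zero_right.mul
      hx'.hasLineDerivAt.tendsto_slope_zero_right

/-- The Jacobian determinant is a null Lagrangian on periodic Lipschitz functions. -/
lemma integral_unitCell_lineDeriv_mul_lineDeriv_comm {u w : (Fin 2 → ℝ) → ℝ} {K L : NNReal}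
    (hu : LipschitzWith K u) (hw : LipschitzWith L w)
    (hup : ∀ (x : Fin 2 → ℝ) (z : Fin 2 → ℤ), u (x + fun i => (z i : ℝ)) = u x)
    (hwp : ∀ (x : Fin 2 → ℝ) (z : Fin 2 → ℤ), w (x + fun i => (z i : ℝ)) = w x)
    (e e' : Fin 2 → ℝ) :
    ∫ x in unitCell, lineDeriv ℝ u x e * lineDeriv ℝ w x e' =
      ∫ x in unitCell, lineDeriv ℝ u x e' * lineDeriv ℝ w x e := by
  have hlim := tendsto_integral_unitCell_slope_mul_slope hu hw (-e') (-e)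
  simp only [lineDeriv_neg, neg_mul_neg] at hlim
  refine tendsto_nhds_unique (tendsto_integral_unitCell_slope_mul_slope hu hw e e')
    (hlim.congr fun h => ?_)
  have hint : ∀ s t, Integrable (fun x => u (x + s) * w (x + t)) (volume.restrict unitCell) := by
    have := hu.continuous
    have := hw.continuous
    exact fun s t => Continuous.integrable_restrict_unitCell (by fun_prop)
  have hexpand : ∀ s t, ∫ x in unitCell, (h⁻¹ • (u (x + s) - u x)) * (h⁻¹ • (w (x + t) - w x)) =
      h⁻¹ * h⁻¹ * ((∫ x in unitCell, u (x + s) * w (x + t)) -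
        (∫ x in unitCell, u (x + s) * w (x + 0)) - (∫ x in unitCell, u (x + 0) * w (x + t)) +
        ∫ x in unitCell, u (x + 0) * w (x + 0)) := by
    intro s t
    rw [← integral_sub (hint _ _) (hint _ _), ← integral_sub _ (hint _ _),
      ← integral_add _ (hint _ _), ← integral_const_mul]
    rotate_left
    · exact ((hint s t).sub (hint s 0)).sub (hint 0 t)
    · exact (hint s t).sub (hint s 0)
    simp only [smul_eq_mul, add_zero]
    exact integral_congr_ae (ae_of_all _ fun x => by ring)
  have hshift : ∀ s t r, ∫ x in unitCell, u (x + s) * w (x + t) =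
      ∫ x in unitCell, u (x + (r + s)) * w (x + (r + t)) := by
    intro s t r
    rw [← setIntegral_unitCell_add (f := fun x => u (x + s) * w (x + t)) _ r]
    · simp only [add_assoc]
    · intro x z
      simp only [add_right_comm x, hup, hwp]
  rw [hexpand, hexpand, hshift (h • -e') (h • -e) (h • e + h • e'),
    hshift (h • -e') 0 (h • e'), hshift 0 (h • -e) (h • e)]
  congr 1
  simp only [smul_neg, add_neg_cancel_right, add_neg_cancel, add_zero]
  rw [show h • e + h • e' + -(h • e) = h • e' by abel]
  ring

lemma memLp_top_jac_apply {v : (Fin 2 → ℝ) → (Fin 2 → ℝ)} {K : NNReal}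
    (hv : LipschitzWith K v) (i j : Fin 2) :
    MemLp (fun x => jac v x i j) ⊤ (volume.restrict unitCell) := by
  refine memLp_top_of_bound (C := K * ‖(Pi.single j 1 : Fin 2 → ℝ)‖) ?_ (ae_of_all _ fun x => ?_)
  · exact ((measurable_pi_apply i).comp
      (measurable_fderiv_apply_const ℝ v (Pi.single j 1))).aestronglyMeasurable
  · exact (norm_le_pi_norm _ i).trans
      (ContinuousLinearMap.le_of_opNorm_le _ (norm_fderiv_le_of_lipschitz ℝ hv) _)

lemma det_e2e2_add (A : Matrix (Fin 2) (Fin 2) ℝ) :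
    (e2e2 + A).det = A 0 0 + (A 0 0 * A 1 1 - A 0 1 * A 1 0) := by
  simp [Matrix.det_fin_two, e2e2]
  ring

lemma integrable_jac_apply {v : (Fin 2 → ℝ) → (Fin 2 → ℝ)} {K : NNReal}
    (hv : LipschitzWith K v) (i j : Fin 2) :
    Integrable (fun x => jac v x i j) (volume.restrict unitCell) :=
  (memLp_top_jac_apply hv i j).integrable le_top

lemma integrable_jac_apply_mul {v : (Fin 2 → ℝ) → (Fin 2 → ℝ)} {K : NNReal}
    (hv : LipschitzWith K v) (i j k l : Fin 2) :
    Integrable (fun x => jac v x i j * jac v x k l) (volume.restrict unitCell) :=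
  ((memLp_top_jac_apply hv k l).mul (r := ⊤) (memLp_top_jac_apply hv i j)).integrable le_top

lemma integrable_det_e2e2_add_jac {v : (Fin 2 → ℝ) → (Fin 2 → ℝ)} {K : NNReal}
    (hv : LipschitzWith K v) :
    Integrable (fun x => (e2e2 + jac v x).det) (volume.restrict unitCell) := by
  simp only [det_e2e2_add]
  exact (integrable_jac_apply hv 0 0).add
    ((integrable_jac_apply_mul hv 0 0 1 1).sub (integrable_jac_apply_mul hv 0 1 1 0))

lemma integral_det_e2e2_add_jac {v : (Fin 2 → ℝ) → (Fin 2 → ℝ)} {K : NNReal}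
    (hv : LipschitzWith K v) (hp : ZsqPeriodic v) :
    ∫ x in unitCell, (e2e2 + jac v x).det = 0 := by
  have hcomp : ∀ i, LipschitzWith K fun x => v x i := fun i =>
    LipschitzWith.of_dist_le_mul fun x y =>
      (dist_le_pi_dist (v x) (v y) i).trans (hv.dist_le_mul x y)
  have hper : ∀ (i : Fin 2) (x : Fin 2 → ℝ) (z : Fin 2 → ℤ),
      v (x + fun i => (z i : ℝ)) i = v x i := fun i x z => congrFun (hp x z) i
  have hjac : ∀ᵐ x ∂(volume.restrict unitCell), ∀ i j,
      jac v x i j = lineDeriv ℝ (fun y => v y i) x (Pi.single j 1) := by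
    filter_upwards [ae_restrict_of_ae hv.ae_differentiableAt] with x hx i j
    have hi := hasFDerivAt_pi'.1 hx.hasFDerivAt i
    rw [(hi.hasLineDerivAt _).lineDeriv]
    rfl
  simp only [det_e2e2_add]
  have hminor : Integrable
      (fun x => jac v x 0 0 * jac v x 1 1 - jac v x 0 1 * jac v x 1 0)
      (volume.restrict unitCell) :=
    (integrable_jac_apply_mul hv 0 0 1 1).sub (integrable_jac_apply_mul hv 0 1 1 0)
  rw [integral_add (integrable_jac_apply hv 0 0) hminor,
    integral_sub (integrable_jac_apply_mul hv 0 0 1 1) (integrable_jac_apply_mul hv 0 1 1 0),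
    integral_congr_ae (hjac.mono fun x hx => hx 0 0),
    integral_unitCell_lineDeriv_eq_zero (hcomp 0) (hper 0),
    integral_congr_ae (hjac.mono fun x hx => congrArg₂ (· * ·) (hx 0 0) (hx 1 1)),
    integral_congr_ae (hjac.mono fun x hx => congrArg₂ (· * ·) (hx 0 1) (hx 1 0)),
    integral_unitCell_lineDeriv_mul_lineDeriv_comm (hcomp 0) (hcomp 1) (hper 0) (hper 1),
    sub_self, add_zero]

lemma isoQ_eq_sub_det (lam mu mu' : ℝ) (A : Matrix (Fin 2) (Fin 2) ℝ) :
    isoQ lam mu A = (lam + mu + mu') * (A 0 0 + A 1 1) ^ 2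
      + (mu - mu') * ((A 0 0 - A 1 1) ^ 2 + (A 0 1 + A 1 0) ^ 2)
      + mu' * (A 0 1 - A 1 0) ^ 2 - 4 * mu' * A.det := by
  rw [isoQ, Matrix.det_fin_two]
  ring

lemma lipschitzWith_neg_abs_sub_round : LipschitzWith 1 fun t : ℝ => -|t - round t| := by
  refine LipschitzWith.of_le_add fun s t => ?_
  have h₁ := round_le t (round s)
  have h₂ := abs_sub_le t s (round s)
  rw [Real.dist_eq, abs_sub_comm s t]
  linarith

lemma hasDerivAt_neg_abs_sub_round {t : ℝ} (h0 : 0 < t) (h1 : t < 1) (h : t ≠ 1 / 2) :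
    HasDerivAt (fun t : ℝ => -|t - round t|) (if t < 1 / 2 then -1 else 1) t := by
  have hfract : ∀ᶠ s in 𝓝 t, -|s - (round s : ℝ)| = -min s (1 - s) := by
    filter_upwards [Ioo_mem_nhds h0 h1] with s hs
    rw [abs_sub_round_eq_min, Int.fract_eq_self.2 ⟨hs.1.le, hs.2⟩]
  split_ifs with hlt
  · refine (hasDerivAt_id t).neg.congr_of_eventuallyEq ?_
    filter_upwards [hfract, Iio_mem_nhds hlt] with s hs hs'
    rw [hs, min_eq_left (by linarith [Set.mem_Iio.1 hs'])]
    rfl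
  · refine ((hasDerivAt_id t).sub_const 1).congr_of_eventuallyEq ?_
    filter_upwards [hfract, Ioi_mem_nhds (lt_of_le_of_ne (not_lt.1 hlt) h.symm)] with s hs hs'
    rw [hs, min_eq_right (by linarith [Set.mem_Ioi.1 hs'])]
    simp

/-- A sawtooth in the direction of lamination, which is optimal for the cell energy. -/
noncomputable def sawtooth (x : Fin 2 → ℝ) : Fin 2 → ℝ :=
  ![-|x 0 - round (x 0)|, 0]

lemma lipschitzWith_sawtooth : LipschitzWith 1 sawtooth := by
  refine LipschitzWith.of_dist_le_mul fun x y => ?_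
  rw [NNReal.coe_one, one_mul, dist_pi_le_iff dist_nonneg, Fin.forall_fin_two]
  refine ⟨?_, by simp [sawtooth]⟩
  have := lipschitzWith_neg_abs_sub_round.dist_le_mul (x 0) (y 0)
  rw [NNReal.coe_one, one_mul] at this
  exact this.trans (dist_le_pi_dist x y 0)

lemma zsqPeriodic_sawtooth : ZsqPeriodic sawtooth := by
  intro x z
  simp [sawtooth, round_add_intCast]

lemma ae_jac_sawtooth : ∀ᵐ x ∂((volume : Measure (Fin 2 → ℝ)).restrict unitCell),
    jac sawtooth x = !![1 - 2 * lamChi x, 0; 0, 0] := by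
  have hne : ∀ c : ℝ, ∀ᵐ x ∂(volume : Measure (Fin 2 → ℝ)), x 0 ≠ c := fun c =>
    Measure.ae_eval_ne (μ := fun _ : Fin 2 => (volume : Measure ℝ)) 0 c
  have hmeas : MeasurableSet unitCell := MeasurableSet.univ_pi fun _ => measurableSet_Ico
  filter_upwards [ae_restrict_of_ae (hne 0), ae_restrict_of_ae (hne (1 / 2)),
    ae_restrict_mem hmeas] with x h0 h12 hx
  have hx0 := hx 0 trivial
  have hchi : (if x 0 < 1 / 2 then (-1 : ℝ) else 1) = 1 - 2 * lamChi x := by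
    rw [lamChi, Int.fract_eq_self.2 hx0]
    split_ifs <;> norm_num
  have hd := hasDerivAt_neg_abs_sub_round (lt_of_le_of_ne hx0.1 h0.symm) hx0.2 h12
  rw [hchi] at hd
  have hf0 := hd.comp_hasFDerivAt x (hasFDerivAt_apply (𝕜 := ℝ) (0 : Fin 2) x)
  have hf : HasFDerivAt sawtooth (ContinuousLinearMap.pi (R := ℝ)
      ![(1 - 2 * lamChi x) • ContinuousLinearMap.proj 0, 0]) x := by
    rw [hasFDerivAt_pi', Fin.forall_fin_two]
    exact ⟨hf0, hasFDerivAt_const (0 : ℝ) x⟩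
  ext i j
  fin_cases i <;> fin_cases j <;> simp [jac, hf.fderiv]

theorem stmt_11 (lam1 mu1 lam2 mu2 : ℝ)
    (h1 : 0 < mu1) (h2 : mu1 = -(lam2 + mu2)) (h3 : mu1 < mu2)
    (h4 : 0 < lam1 + mu1) :
    (∀ (v : (Fin 2 → ℝ) → (Fin 2 → ℝ)) (K : NNReal),
      LipschitzWith K v → ZsqPeriodic v → 0 ≤ lamEnergy lam1 mu1 lam2 mu2 v) ∧
    (∃ (v : (Fin 2 → ℝ) → (Fin 2 → ℝ)) (K : NNReal),
      LipschitzWith K v ∧ ZsqPeriodic v ∧ lamEnergy lam1 mu1 lam2 mu2 v = 0) := by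
  set f : ((Fin 2 → ℝ) → (Fin 2 → ℝ)) → (Fin 2 → ℝ) → ℝ := fun v x =>
    lamChi x * isoQ lam1 mu1 (e2e2 + jac v x) +
      (1 - lamChi x) * isoQ lam2 mu2 (e2e2 + jac v x) with hf
  have hzero : lam2 + mu2 + mu1 = 0 := by linarith
  refine ⟨fun v K hv hp => ?_, sawtooth, 1, lipschitzWith_sawtooth, zsqPeriodic_sawtooth, ?_⟩
  · change 0 ≤ ∫ x in unitCell, f v x
    by_cases hint : Integrable (f v) (volume.restrict unitCell)
    · calc (0 : ℝ) = ∫ x in unitCell, -(4 * mu1) * (e2e2 + jac v x).det := by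
            rw [integral_const_mul, integral_det_e2e2_add_jac hv hp, mul_zero]
        _ ≤ ∫ x in unitCell, f v x := by
            refine integral_mono ((integrable_det_e2e2_add_jac hv).const_mul _) hint fun x => ?_
            simp only [hf, isoQ_eq_sub_det _ _ mu1, hzero, lamChi]
            have h5 : 0 ≤ mu2 - mu1 := by linarith
            have h6 : 0 ≤ lam1 + mu1 + mu1 := by linarith
            split_ifs
            · have := mul_nonneg h6 (sq_nonneg ((e2e2 + jac v x) 0 0 + (e2e2 + jac v x) 1 1))
              have := mul_nonneg h1.le (sq_nonneg ((e2e2 + jac v x) 0 1 - (e2e2 + jac v x) 1 0))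
              linarith
            · have := mul_nonneg h5 (add_nonneg
                (sq_nonneg ((e2e2 + jac v x) 0 0 - (e2e2 + jac v x) 1 1))
                (sq_nonneg ((e2e2 + jac v x) 0 1 + (e2e2 + jac v x) 1 0)))
              have := mul_nonneg h1.le (sq_nonneg ((e2e2 + jac v x) 0 1 - (e2e2 + jac v x) 1 0))
              linarith
    · rw [integral_undef hint]
  · calc ∫ x in unitCell, f sawtooth x
        = ∫ x in unitCell, -(4 * mu1) * (e2e2 + jac sawtooth x).det := by
          refine integral_congr_ae ?_
          filter_upwards [ae_jac_sawtooth] with x hx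
          simp only [hf, isoQ_eq_sub_det _ _ mu1, hzero, hx]
          rcases ite_eq_or_eq (Int.fract (x 0) < 1 / 2) (1 : ℝ) 0 with hchi | hchi <;>
            simp only [lamChi, hchi] <;> norm_num [e2e2]
      _ = 0 := by
          rw [integral_const_mul, integral_det_e2e2_add_jac lipschitzWith_sawtooth
            zsqPeriodic_sawtooth, mul_zero]
end
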